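/- Let k be a field of characteristic zero and X = {1, 2} with 1 ≺ 2. In the free algebra k⟨X⟩, define the partial Bell differential polynomials B_{n,m} by B_{0,0} = 1, B_{n,m} = 0 if m = 0 < n or m > n, and B_{n,m} = E(2)·B_{n−1,m−1} + E(1)·B_{n−1,m} − B_{n−1,m}·E(1). Then B_{n,m} = Σ (n! / (t₀!·t₁!⋯t_r!)) · E(2)^{t₀} · ∏_{i=1}^{r} (C(α_i)·E(α_i) / |α_i|!)^{t_i}, where the sum is over all t₀ ≥ 0, all r ≥ 0, all strictly decreasing tuples of Lyndon words over X with 2 ≻ α₁ ≻ α₂ ≻ ⋯ ≻ α_r ≻ 1, and all tuples of positive integers (t₁, …, t_r) such that t₀ + Σ_{i=1}^{r} t_i·α_i(2) = m and Σ_{i=1}^{r} t_i·α_i(1) = n−m, the product ∏_{i=1}^{r} being taken in this decreasing order of the α_i. -/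

import Mathlib

/-- A nonempty word over a linearly ordered alphabet is a Lyndon word if it is
strictly lexicographically smaller than every nontrivial rotation of itself
(vacuously true for single letters). -/
def IsLyndon {X : Type*} [LinearOrder X] (w : List X) : Prop :=
  w ≠ [] ∧ ∀ u v : List X, u ≠ [] → v ≠ [] → w = u ++ v → List.Lex (· < ·) w (v ++ u)

namespace LS

abbrev W := List (Fin 2)

theorem lt_cases {u v : W} (h : u < v) : u <+: v ∨ ∀ s t : W, u ++ s < v ++ t := by
  have h' : List.Lex (· < ·) u v := h
  clear h
  induction h' with
  | nil => left; exact List.nil_prefix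
  | cons h ih =>
    rcases ih with ih | ih
    · left; simpa using ih
    · right; intro s t; exact List.Lex.cons (ih s t)
  | rel h => right; intro s t; exact List.Lex.rel h

theorem le_append (u v : W) : u ≤ u ++ v := by
  induction u with
  | nil => cases v with
    | nil => exact le_refl _
    | cons a v => exact le_of_lt List.Lex.nil
  | cons a u ih => exact List.cons_le_cons a ih

theorem lt_append_left (s : W) {u v : W} (h : u < v) : s ++ u < s ++ v :=
  List.Lex.append_left _ h s

theorem lt_of_append_left (s : W) {u v : W} (h : s ++ u < s ++ v) : u < v := by
  rcases lt_trichotomy u v with h1 | h1 | h1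
  · exact h1
  · subst h1; exact absurd h (lt_irrefl _)
  · exact absurd (h.trans (lt_append_left s h1)) (lt_irrefl _)

/-- strict comparison when the left one is at least as long -/
theorem lt_strong {u v : W} (h : u < v) (hl : v.length ≤ u.length) (s t : W) : u ++ s < v ++ t := by
  rcases lt_cases h with h1 | h1
  · have := h1.eq_of_length_le hl
    subst this; exact absurd h (lt_irrefl _)
  · exact h1 s t

theorem lyn_suffix {w : W} (hw : IsLyndon w) {u v : W} (hu : u ≠ []) (hv : v ≠ []) (h : w = u ++ v) :
    w < v := by
  have h1 : w < v ++ u := hw.2 u v hu hv h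
  by_contra hlt
  have hne : v ≠ w := by
    intro e
    have := congrArg List.length h
    rw [e] at this
    simp at this; exact hu this
  have hvw : v < w := lt_of_le_of_ne (not_lt.1 hlt) hne
  rcases lt_cases hvw with ⟨w', hw'⟩ | h2
  · have hl : w'.length = u.length := by
      have := congrArg List.length h
      rw [← hw'] at this; simp at this; omega
    have h3 : w' < u := lt_of_append_left v (by rw [hw']; exact h1)
    have h4 : w' ++ v < u ++ v := lt_strong h3 hl.ge v v
    have hw'n : w' ≠ [] := by
      intro e; subst e; simp at hl; exact hu (List.length_eq_zero_iff.1 hl.symm)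
    have h5 : w < w' ++ v := hw.2 v w' hv hw'n hw'.symm
    rw [← h] at h4
    exact absurd (h4.trans h5) (lt_irrefl _)
  · have := h2 u []
    simp at this
    exact absurd (h1.trans this) (lt_irrefl _)

theorem lyn_of_suffix {w : W} (hn : w ≠ [])
    (h : ∀ u v : W, u ≠ [] → v ≠ [] → w = u ++ v → w < v) : IsLyndon w :=
  ⟨hn, fun u v hu hv e => lt_of_lt_of_le (h u v hu hv e) (le_append v u)⟩

theorem lyn_single (x : Fin 2) : IsLyndon [x] := by
  refine lyn_of_suffix (by simp) ?_
  intro u v hu hv e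
  rcases u with _ | ⟨a, u⟩
  · exact absurd rfl hu
  · simp at e; exact absurd e.2.2 hv

theorem lyn_append {u v : W} (hu : IsLyndon u) (hv : IsLyndon v) (h : u < v) :
    IsLyndon (u ++ v) ∧ u ++ v < v := by
  have key : u ++ v < v := by
    rcases lt_cases h with ⟨v', hv'⟩ | h1
    · have hv'n : v' ≠ [] := by
        intro e; subst e; simp at hv'; subst hv'; exact absurd h (lt_irrefl _)
      have := lt_append_left u (lyn_suffix hv hu.1 hv'n hv'.symm)
      rwa [hv'] at this
    · simpa using h1 v []
  refine ⟨lyn_of_suffix (by simp [hu.1]) ?_, key⟩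
  intro s t hs ht e
  rcases List.append_eq_append_iff.1 e with ⟨a, h1, h2⟩ | ⟨a, h1, h2⟩
  · -- s = u ++ a, v = a ++ t
    by_cases ha : a = []
    · subst ha; simp at h2; subst h2; exact key
    · exact key.trans (lyn_suffix hv ha ht h2)
  · -- u = s ++ a, t = a ++ v
    by_cases ha : a = []
    · subst ha; simp at h2; subst h2; exact key
    · rw [h2]
      refine lt_strong (lyn_suffix hu hs ha h1) ?_ v v
      rw [h1]; simp

/-- repeated power -/
abbrev pw (a : W) (j : ℕ) : W := (List.replicate j a).flatten

theorem pw_succ (a : W) (j : ℕ) : pw a (j+1) = a ++ pw a j := by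
  simp [pw, List.replicate_succ]

theorem pw_succ' (a : W) (j : ℕ) : pw a (j+1) = pw a j ++ a := by
  simp [pw, List.replicate_succ']

theorem pw_add (a : W) (i j : ℕ) : pw a (i+j) = pw a i ++ pw a j := by
  simp [pw, ← List.replicate_append_replicate]

theorem pw_zero (a : W) : pw a 0 = [] := rfl

theorem pw_length (a : W) (j : ℕ) : (pw a j).length = a.length * j := by
  simp [pw, mul_comm]

theorem lyn_pw {u v : W} (hu : IsLyndon u) (hv : IsLyndon v) (h : u < v) (j : ℕ) :
    IsLyndon (u ++ pw v j) ∧ u ++ pw v j < v := by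
  induction j with
  | zero => simpa [pw] using ⟨hu, h⟩
  | succ j ih =>
    rw [pw_succ', ← List.append_assoc]
    exact lyn_append ih.1 hv ih.2

abbrev fl (L : List (W × ℕ)) : W := (L.map fun p => (List.replicate p.2 p.1).flatten).flatten

def Good (L : List (W × ℕ)) : Prop :=
  (∀ p ∈ L, IsLyndon p.1 ∧ 1 ≤ p.2) ∧ L.Pairwise (fun p q => q.1 < p.1)

theorem chain_iff (L : List (W × ℕ)) :
    L.IsChain (fun p q => List.Lex (· < ·) q.1 p.1) ↔ L.Pairwise (fun p q => q.1 < p.1) := by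
  have : Trans (fun p q : W × ℕ => q.1 < p.1) (fun p q : W × ℕ => q.1 < p.1)
    (fun p q : W × ℕ => q.1 < p.1) := ⟨fun h1 h2 => lt_trans h2 h1⟩
  exact List.isChain_iff_pairwise (R := fun p q : W × ℕ => q.1 < p.1)

theorem fl_cons (p : W × ℕ) (L) : fl (p :: L) = pw p.1 p.2 ++ fl L := by simp [fl, pw]
theorem fl_append (L L') : fl (L ++ L') = fl L ++ fl L' := by simp [fl]

/-- insertion -/
theorem insert_lyn (L : List (W × ℕ)) : ∀ u : W, IsLyndon u → Good L →
    ∃ L', Good L' ∧ fl L' = u ++ fl L := by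
  induction L with
  | nil => intro u hu _; exact ⟨[(u,1)], ⟨by simpa using hu, by simp⟩, by simp [fl]⟩
  | cons p L ih =>
    obtain ⟨l, t⟩ := p
    intro u hu hL
    have hp := List.pairwise_cons.1 hL.2
    have hl := hL.1 (l,t) (by simp)
    have hL1 : Good L := ⟨fun q hq => hL.1 q (by simp [hq]), hp.2⟩
    rcases lt_trichotomy u l with h | h | h
    · obtain ⟨L', h1, h2⟩ := ih (u ++ pw l t) (lyn_pw hu hl.1 h t).1 hL1
      exact ⟨L', h1, by rw [h2, fl_cons]; simp⟩
    · subst h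
      refine ⟨(u,t+1) :: L, ⟨?_, ?_⟩, ?_⟩
      · intro q hq
        rcases List.mem_cons.1 hq with rfl | hq
        · exact ⟨hu, by simp⟩
        · exact hL1.1 q hq
      · exact List.pairwise_cons.2 ⟨hp.1, hp.2⟩
      · rw [fl_cons, fl_cons, pw_succ]; simp
    · refine ⟨(u,1) :: (l,t) :: L, ⟨?_, ?_⟩, ?_⟩
      · intro q hq
        rcases List.mem_cons.1 hq with rfl | hq
        · exact ⟨hu, le_refl _⟩
        · exact hL.1 q hq
      · refine List.pairwise_cons.2 ⟨?_, hL.2⟩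
        intro q hq
        rcases List.mem_cons.1 hq with rfl | hq
        · exact h
        · exact (hp.1 q hq).trans h
      · rw [fl_cons]; simp [pw]

theorem exists_good (w : W) : ∃ L, Good L ∧ fl L = w := by
  induction w with
  | nil => exact ⟨[], ⟨by simp, by simp⟩, rfl⟩
  | cons x w ih =>
    obtain ⟨L, h1, h2⟩ := ih
    obtain ⟨L', h3, h4⟩ := insert_lyn L [x] (lyn_single x) h1
    exact ⟨L', h3, by rw [h4, h2]; rfl⟩

/-- if `u0 ++ fl L` is below all factors of `L` it is Lyndon -/
theorem lyn_of_lt (L : List (W × ℕ)) : ∀ u : W, IsLyndon u → (∀ p ∈ L, IsLyndon p.1) →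
    (∀ p ∈ L, u ++ fl L < p.1) → IsLyndon (u ++ fl L) := by
  induction L with
  | nil => intro u hu _ _; simpa [fl] using hu
  | cons p L ih =>
    intro u hu h1 h2
    have h3 : u < p.1 := lt_of_le_of_lt (le_append u _) (h2 p (by simp))
    have := ih (u ++ pw p.1 p.2) (lyn_pw hu (h1 p (by simp)) h3 p.2).1
      (fun q hq => h1 q (by simp [hq])) (fun q hq => by
        have := h2 q (by simp [hq])
        rwa [fl_cons, ← List.append_assoc] at this)
    rwa [fl_cons, ← List.append_assoc]

/-- all nonempty suffixes satisfy `Q` -/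
def Suf (Q : W → Prop) (w : W) : Prop := ∀ u s : W, w = u ++ s → s ≠ [] → Q s

theorem suf_append {Q : W → Prop} (hQ : Monotone Q) {w w' : W} (h : Suf Q w) (h' : Suf Q w') :
    Suf Q (w ++ w') := by
  intro u s e hs
  rcases List.append_eq_append_iff.1 e with ⟨b, h1, h2⟩ | ⟨b, h1, h2⟩
  · exact h' b s h2 hs
  · by_cases hb : b = []
    · subst hb; simp at h2; subst h2; exact h' [] s rfl hs
    · rw [h2]; exact hQ (le_append _ _) (h u b h1 hb)

theorem suf_nil (Q : W → Prop) : Suf Q [] := by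
  intro u s e hs
  simp at e; exact absurd e.2 hs

theorem suf_lyn {Q : W → Prop} (hQ : Monotone Q) {l : W} (hl : IsLyndon l) (h : Q l) : Suf Q l := by
  intro u s e hs
  by_cases hu : u = []
  · subst hu; simp at e; subst e; exact h
  · exact hQ (le_of_lt (lyn_suffix hl hu hs e)) h

theorem suf_pw {Q : W → Prop} (hQ : Monotone Q) {l : W} (hl : IsLyndon l) (h : Q l) (j : ℕ) :
    Suf Q (pw l j) := by
  induction j with
  | zero => exact suf_nil Q
  | succ j ih => rw [pw_succ]; exact suf_append hQ (suf_lyn hQ hl h) ih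

theorem suf_fl {Q : W → Prop} (hQ : Monotone Q) (L : List (W × ℕ))
    (h : ∀ p ∈ L, IsLyndon p.1 ∧ Q p.1) : Suf Q (fl L) := by
  induction L with
  | nil => exact suf_nil Q
  | cons p L ih =>
    rw [fl_cons]
    exact suf_append hQ (suf_pw hQ (h p (by simp)).1 (h p (by simp)).2 _)
      (ih fun q hq => h q (by simp [hq]))

theorem mono_le (a : W) : Monotone (fun s : W => a ≤ s) := fun _ _ h h' => le_trans h' h
theorem mono_lt (a : W) : Monotone (fun s : W => a < s) := fun _ _ h h' => lt_of_lt_of_le h' h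

/-- standard factorization of `x w a` is `(x w, a)` -/
theorem standard {x : Fin 2} {w a : W} (ha : IsLyndon a) (hw : Suf (fun s => a ≤ s) w)
    (δ β' : W) (e : (x :: w) ++ a = β' ++ δ) (hβ : β' ≠ []) (hδ : IsLyndon δ) :
    δ.length ≤ a.length := by
  rcases List.append_eq_append_iff.1 e with ⟨b, h1, h2⟩ | ⟨b, h1, h2⟩
  · rw [h2]; simp
  · by_cases hb : b = []
    · subst hb; simp at h2; rw [h2]
    · exfalso
      rcases β' with _ | ⟨y, β⟩
      · exact hβ rfl
      · simp at h1
        have h3 : a ≤ b := hw β b h1.2 hb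
        have h4 : δ < a := lyn_suffix hδ hb ha.1 h2
        rw [h2] at h4
        exact absurd (lt_of_le_of_lt (h3.trans (le_append b a)) h4) (lt_irrefl _)

/-- injectivity of `(u, j) ↦ u a^j` -/
theorem inj_aux {x : Fin 2} {w a u' : W} (ha : IsLyndon a) (hw : Suf (fun s => a < s) w)
    (hu' : u' ≠ []) (i j : ℕ) (h : (x :: w) ++ pw a i = u' ++ pw a j) :
    j ≤ i := by
  by_contra hlt
  obtain ⟨d, rfl⟩ : ∃ d, j = (d + 1) + i := ⟨j - i - 1, by omega⟩
  rw [pw_add, ← List.append_assoc] at h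
  have h := List.append_cancel_right h
  rw [pw_succ', ← List.append_assoc] at h
  rcases hq : u' ++ pw a d with _ | ⟨y, q⟩
  · simp at hq; exact hu' hq.1
  · rw [hq] at h
    simp at h
    exact absurd (hw q a h.2 ha.1) (lt_irrefl _)

/-- factors of the tail of a Lyndon word are larger than the word -/
theorem tail_factors {x : Fin 2} {w : W} (h : IsLyndon (x :: w)) (L : List (W × ℕ)) (hL : Good L)
    (e : fl L = w) : ∀ p ∈ L, x :: w < p.1 := by
  rcases List.eq_nil_or_concat L with rfl | ⟨L', q, rfl⟩
  · simp
  · rw [List.concat_eq_append] at *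
    have hq := hL.1 q (by simp)
    obtain ⟨t, ht⟩ : ∃ t, q.2 = t + 1 := ⟨q.2 - 1, by omega⟩
    have hlt : x :: w < q.1 := by
      refine lyn_suffix h (u := x :: (fl L' ++ pw q.1 t)) (by simp) hq.1.1 ?_
      rw [← e, fl_append, fl_cons, ht, pw_succ']
      simp [fl]
    intro p hp
    rcases List.mem_append.1 hp with hp | hp
    · exact hlt.trans ((List.pairwise_append.1 hL.2).2.2 p hp q (by simp))
    · simp at hp; subst hp; exact hlt

theorem lyn_le_one {l : W} (h : IsLyndon l) : l ≤ [1] := by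
  rcases List.eq_nil_or_concat l with rfl | ⟨l', q, rfl⟩
  · exact absurd rfl h.1
  · rw [List.concat_eq_append] at *
    have h1 : ([q] : W) ≤ [1] := by
      rcases eq_or_lt_of_le (Fin.le_last q : q ≤ 1) with rfl | h2
      · exact le_refl _
      · exact le_of_lt (List.Lex.rel h2)
    by_cases hl' : l' = []
    · subst hl'; exact h1
    · exact (le_of_lt (lyn_suffix h hl' (by simp) rfl)).trans h1

theorem lyn_ge_zero {l : W} (h : IsLyndon l) : [0] ≤ l := by
  rcases l with _ | ⟨x, l⟩
  · exact absurd rfl h.1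
  · rcases eq_or_lt_of_le (Fin.zero_le x) with rfl | h2
    · exact le_append [0] l
    · exact le_of_lt (List.Lex.rel h2)

end LS
namespace LS
open Polynomial Finset
set_option linter.unusedSectionVars false

section alg
variable {k R : Type*} [Field k] [CharZero k] [Ring R] [Algebra k R]

def Eqv (N : ℕ) (f g : R[X]) : Prop := (X : R[X]) ^ (N+1) ∣ f - g

theorem Eqv.refl (N : ℕ) (f : R[X]) : Eqv N f f := by simp [Eqv]
theorem Eqv.of_eq {N : ℕ} {f g : R[X]} (h : f = g) : Eqv N f g := h ▸ Eqv.refl N f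
theorem Eqv.symm {N : ℕ} {f g : R[X]} (h : Eqv N f g) : Eqv N g f := by
  unfold Eqv at *; rw [← neg_sub]; exact (dvd_neg).2 h
theorem Eqv.trans {N : ℕ} {f g h : R[X]} (h1 : Eqv N f g) (h2 : Eqv N g h) : Eqv N f h := by
  unfold Eqv at *; rw [← sub_add_sub_cancel f g h]; exact dvd_add h1 h2
theorem Eqv.add {N : ℕ} {f g f' g' : R[X]} (h1 : Eqv N f g) (h2 : Eqv N f' g') :
    Eqv N (f + f') (g + g') := by
  unfold Eqv at *; rw [add_sub_add_comm]; exact dvd_add h1 h2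
theorem Eqv.sub {N : ℕ} {f g f' g' : R[X]} (h1 : Eqv N f g) (h2 : Eqv N f' g') :
    Eqv N (f - f') (g - g') := by
  unfold Eqv at *; rw [sub_sub_sub_comm]; exact dvd_sub h1 h2
theorem dvd_left {m : ℕ} {f : R[X]} (g : R[X]) (h : (X : R[X]) ^ m ∣ f) : (X : R[X]) ^ m ∣ g * f := by
  obtain ⟨c, rfl⟩ := h
  exact ⟨g * c, by rw [← mul_assoc, ← mul_assoc, X_pow_mul]⟩
theorem dvd_smul' {m : ℕ} {f : R[X]} (r : k) (h : (X : R[X]) ^ m ∣ f) : (X : R[X]) ^ m ∣ r • f := by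
  obtain ⟨c, rfl⟩ := h
  exact ⟨r • c, by rw [mul_smul_comm]⟩
theorem dvd_mul_mul {m n : ℕ} {f g : R[X]} (h : (X : R[X]) ^ m ∣ f) (h' : (X : R[X]) ^ n ∣ g) :
    (X : R[X]) ^ (m+n) ∣ f * g := by
  obtain ⟨c, rfl⟩ := h
  obtain ⟨d, rfl⟩ := h'
  exact ⟨c * d, by rw [pow_add, mul_assoc, ← mul_assoc c, ← X_pow_mul, ← mul_assoc, ← mul_assoc, ← mul_assoc]⟩
theorem Eqv.mul_left {N : ℕ} {f g : R[X]} (z : R[X]) (h1 : Eqv N f g) : Eqv N (z * f) (z * g) := by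
  unfold Eqv at *; rw [← mul_sub]; exact dvd_left z h1
theorem Eqv.mul_right {N : ℕ} {f g : R[X]} (z : R[X]) (h1 : Eqv N f g) : Eqv N (f * z) (g * z) := by
  unfold Eqv at *; rw [← sub_mul]; exact Dvd.dvd.mul_right h1 z
theorem Eqv.coeff {N : ℕ} {f g : R[X]} (h : Eqv N f g) {n : ℕ} (hn : n ≤ N) :
    f.coeff n = g.coeff n := by
  have := (X_pow_dvd_iff.1 h) n (by omega)
  rw [coeff_sub] at this
  exact sub_eq_zero.1 this
theorem dvd_monomial {m n : ℕ} (h : m ≤ n) (z : R) : (X : R[X]) ^ m ∣ monomial n z := by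
  rw [X_pow_dvd_iff]
  intro d hd
  rw [coeff_monomial, if_neg (by omega)]

noncomputable def θ (f : R[X]) : R[X] := X * derivative f

theorem θ_mul (f g : R[X]) : θ (f * g) = θ f * g + f * θ g := by
  unfold θ
  rw [derivative_mul, mul_add, mul_assoc, ← mul_assoc f, ← X_mul, mul_assoc]

theorem θ_coeff (f : R[X]) (n : ℕ) : (θ f).coeff n = (n : R) * f.coeff n := by
  unfold θ
  cases n with
  | zero => simp
  | succ n => rw [coeff_X_mul, coeff_derivative, ← Nat.cast_succ, Nat.cast_comm]

variable (k) in
noncomputable def ex (N : ℕ) (Y : R[X]) : R[X] := ∑ t ∈ range (N+1), ((t.factorial : k)⁻¹) • Y ^ t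

theorem ex_deriv (N d : ℕ) (hd : 1 ≤ d) (y : R) :
    Eqv N (θ (ex k N (monomial d y))) ((d : k) • (monomial d y * ex k N (monomial d y))) := by
  have h1 : θ (ex k N (monomial d y)) =
      ∑ t ∈ range (N+1), ((t.factorial : k)⁻¹) • ((d * t : k) • (monomial d y) ^ t) := by
    ext n
    rw [θ_coeff]
    simp only [ex, finsetSum_coeff, coeff_smul, monomial_pow, coeff_monomial, mul_sum]
    refine Finset.sum_congr rfl fun t _ => ?_
    split_ifs with h
    · subst h
      rw [mul_smul_comm]
      congr 1
      rw [Algebra.smul_def]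
      simp
    · simp
  rw [h1, Finset.sum_range_succ']
  have h2 : (d : k) • (monomial d y * ex k N (monomial d y)) =
     (∑ t ∈ range (N+1), ((t.factorial : k)⁻¹ * d) • ((monomial d y) ^ (t+1)) : R[X]) := by
    rw [ex, mul_sum, smul_sum]
    refine Finset.sum_congr rfl fun t _ => ?_
    rw [mul_smul_comm, smul_smul, pow_succ', mul_comm (d:k)]
  rw [h2, Finset.sum_range_succ]
  have h3 : ∀ t : ℕ, (((t+1).factorial : k)⁻¹) • (((d:k) * ((t+1 : ℕ):k)) • (monomial d y) ^ (t+1)) =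
      ((t.factorial : k)⁻¹ * d) • ((monomial d y) ^ (t+1) : R[X]) := by
    intro t
    rw [smul_smul]
    congr 1
    have : (t.factorial : k) ≠ 0 := by exact_mod_cast t.factorial_ne_zero
    have h' : ((t+1 : ℕ) : k) ≠ 0 := by exact_mod_cast t.succ_ne_zero
    rw [Nat.factorial_succ]; push_cast at *
    field_simp
  simp only [h3]
  refine Eqv.add (Eqv.refl _ _) ?_
  simp only [Nat.cast_zero, mul_zero, zero_smul, smul_zero]
  unfold Eqv
  rw [zero_sub, dvd_neg]
  apply dvd_smul'
  rw [monomial_pow]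
  apply dvd_monomial
  nlinarith

variable (k) in
noncomputable def Dd (Y : R[X]) : Module.End k R[X] := LinearMap.mulRight k Y - LinearMap.mulLeft k Y

theorem Dd_apply (Y Z : R[X]) : Dd k Y Z = Z * Y - Y * Z := by simp [Dd]

theorem binom (Y Z : R[X]) (q : ℕ) : ((q.factorial : k)⁻¹) • (Z * Y ^ q) =
    ∑ p ∈ antidiagonal q, (((p.1.factorial : k)⁻¹) • Y ^ p.1) * (((p.2.factorial : k)⁻¹) • ((Dd k Y) ^ p.2) Z) := by
  have hc : Commute (LinearMap.mulLeft k Y) (Dd k Y) := by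
    unfold Dd
    refine Commute.sub_right ?_ (Commute.refl _)
    exact LinearMap.commute_mulLeft_right Y Y
  have h := hc.add_pow' q
  have h2 : LinearMap.mulLeft k Y + Dd k Y = LinearMap.mulRight k Y := by unfold Dd; abel
  rw [h2] at h
  have h3 := congrArg (fun f => f Z) h
  simp only [LinearMap.pow_mulRight, LinearMap.pow_mulLeft, LinearMap.mulRight_apply, LinearMap.sum_apply,
    LinearMap.smul_apply, Module.End.mul_apply, LinearMap.mulLeft_apply] at h3
  rw [h3, smul_sum]
  refine Finset.sum_congr rfl fun p hp => ?_
  rw [smul_mul_smul_comm, ← Nat.cast_smul_eq_nsmul k, smul_smul]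
  congr 1
  have hp' := mem_antidiagonal.1 hp
  rw [← hp', Nat.choose_symm_add, Nat.add_choose, Nat.cast_div (Nat.factorial_mul_factorial_dvd_factorial_add _ _)]
  · have h1 : (p.1.factorial : k) ≠ 0 := by exact_mod_cast p.1.factorial_ne_zero
    have h1 : (p.2.factorial : k) ≠ 0 := by exact_mod_cast p.2.factorial_ne_zero
    have h1 : ((p.1 + p.2).factorial : k) ≠ 0 := by exact_mod_cast (p.1+p.2).factorial_ne_zero
    push_cast
    field_simp
  · exact_mod_cast mul_ne_zero p.1.factorial_ne_zero p.2.factorial_ne_zero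

theorem Dd_dvd (Y Z : R[X]) (hY : X ∣ Y) (j : ℕ) : X ^ j ∣ ((Dd k Y) ^ j) Z := by
  induction j with
  | zero => simp
  | succ j ih =>
    rw [pow_succ' (Dd k Y), Module.End.mul_apply, Dd_apply]
    have hY' : (X : R[X]) ^ 1 ∣ Y := by simpa using hY
    refine dvd_sub (dvd_mul_mul ih hY') ?_
    rw [add_comm]
    exact dvd_mul_mul hY' ih

theorem pow_dvd' (Y : R[X]) (hY : X ∣ Y) (j : ℕ) : X ^ j ∣ Y ^ j := by
  induction j with
  | zero => simp
  | succ j ih =>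
    have hY' : (X : R[X]) ^ 1 ∣ Y := by simpa using hY
    rw [pow_succ Y]; exact dvd_mul_mul ih hY'

theorem ex_conj (N : ℕ) (Y Z : R[X]) (hY : X ∣ Y) :
    Eqv N (Z * ex k N Y) (ex k N Y * ∑ j ∈ range (N+1), ((j.factorial : k)⁻¹) • ((Dd k Y) ^ j) Z) := by
  set f : ℕ × ℕ → R[X] := fun p =>
    (((p.1.factorial : k)⁻¹) • Y ^ p.1) * (((p.2.factorial : k)⁻¹) • ((Dd k Y) ^ p.2) Z) with hf
  have h1 : Z * ex k N Y = ∑ q ∈ range (N+1), ∑ p ∈ antidiagonal q, f p := by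
    rw [ex, mul_sum]
    refine Finset.sum_congr rfl fun q _ => ?_
    rw [mul_smul_comm, binom]
  have h2 : ∑ q ∈ range (N+1), ∑ p ∈ antidiagonal q, f p =
      ∑ p ∈ (range (N+1) ×ˢ range (N+1)).filter (fun p => p.1 + p.2 ≤ N), f p := by
    rw [← Finset.sum_fiberwise_of_maps_to (t := range (N+1)) (g := fun p : ℕ × ℕ => p.1 + p.2)]
    · refine Finset.sum_congr rfl fun q hq => ?_
      refine Finset.sum_congr ?_ fun _ _ => rfl
      ext p
      simp at hq ⊢
      omega
    · intro p hp
      simp at hp ⊢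
      omega
  have h3 : ex k N Y * ∑ j ∈ range (N+1), ((j.factorial : k)⁻¹) • ((Dd k Y) ^ j) Z =
      ∑ p ∈ range (N+1) ×ˢ range (N+1), f p := by
    rw [ex, Finset.sum_mul_sum, Finset.sum_product]
  rw [h1, h2, h3]
  rw [← Finset.sum_filter_add_sum_filter_not (range (N+1) ×ˢ range (N+1)) (fun p => p.1 + p.2 ≤ N) f]
  unfold Eqv
  rw [sub_add_cancel_left, dvd_neg]
  refine Finset.dvd_sum fun p hp => ?_
  simp at hp
  refine dvd_trans (pow_dvd_pow X (show N + 1 ≤ p.1 + p.2 by omega)) ?_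
  exact dvd_mul_mul (dvd_smul' _ (pow_dvd' Y hY _)) (dvd_smul' _ (Dd_dvd Y Z hY _))

end alg
end LS
namespace LS
open Polynomial Finset
set_option linter.unusedSectionVars false

section core
variable {k R : Type*} [Field k] [CharZero k] [Ring R] [Algebra k R]

noncomputable def cc (C : W → k) (u : W) : k := C u / (u.length.factorial : k)
noncomputable def wt (C : W → k) (u : W) : k := (u.length : k) * cc C u
noncomputable def EE (E : W → R) (u : W) : R[X] := monomial u.length (E u)

def HE (E : W → R) : Prop := ∀ αL αR : W, IsLyndon (αL ++ αR) → αL ≠ [] → IsLyndon αR →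
      (∀ δ β' : W, αL ++ αR = β' ++ δ → β' ≠ [] → IsLyndon δ →
        δ.length ≤ αR.length) →
      E (αL ++ αR) = E αL * E αR - E αR * E αL

def HC2 (C : W → k) : Prop := ∀ (x : Fin 2) (w : W) (L : List (W × ℕ)),
      IsLyndon (x :: w) → w ≠ [] →
      (∀ p ∈ L, IsLyndon p.1 ∧ 1 ≤ p.2) →
      L.Pairwise (fun p q => q.1 < p.1) →
      fl L = w →
      C (x :: w) =
        (w.length.factorial : k) /
            (L.map fun p => (p.1.length.factorial : k) ^ p.2 * (p.2.factorial : k)).prod *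
          (L.map fun p => C p.1 ^ p.2).prod

theorem fl_nil {L : List (W × ℕ)} (hL : Good L) (h : fl L = []) : L = [] := by
  rcases L with _ | ⟨p, L⟩
  · rfl
  · exfalso
    rw [fl_cons] at h
    have h1 := hL.1 p (by simp)
    have h2 := congrArg List.length (List.append_eq_nil_iff.1 h).1
    rw [pw_length] at h2
    simp at h2
    rcases h2 with h2 | h2
    · exact h1.1.1 h2
    · omega

variable {C : W → k} (hC1 : ∀ x : Fin 2, C [x] = 1) (hC2 : HC2 C)

include hC1 hC2 in
theorem wt_eq {x : Fin 2} {L : List (W × ℕ)} (hL : Good L) (hu : IsLyndon (x :: fl L)) :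
    wt C (x :: fl L) = (L.map fun p => cc C p.1 ^ p.2 / (p.2.factorial : k)).prod := by
  by_cases hw : fl L = []
  · have := fl_nil hL hw
    subst this
    simp [wt, cc, fl, hC1]
  · have h1 : (L.map fun p => cc C p.1 ^ p.2 / (p.2.factorial : k)).prod =
      (L.map fun p => C p.1 ^ p.2).prod /
      (L.map fun p => (p.1.length.factorial : k) ^ p.2 * (p.2.factorial : k)).prod := by
      clear hu hL hw
      induction L with
      | nil => simp
      | cons p L ih =>
        rw [List.map_cons, List.prod_cons, ih]
        simp only [List.map_cons, List.prod_cons, cc, div_pow]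
        rw [div_div, div_mul_div_comm]
    rw [h1, wt, cc, hC2 x (fl L) L hu hw hL.1 hL.2 rfl]
    have h2 : ((fl L).length.factorial : k) ≠ 0 := by exact_mod_cast Nat.factorial_ne_zero _
    have h3 : (((fl L).length : k) + 1) ≠ 0 := Nat.cast_add_one_ne_zero _
    rw [List.length_cons, Nat.factorial_succ]
    push_cast
    field_simp

theorem good_snoc {L : List (W × ℕ)} (hL : Good L) {a : W} (ha : IsLyndon a)
    (h : ∀ p ∈ L, a < p.1) {j : ℕ} (hj : 1 ≤ j) : Good (L ++ [(a, j)]) := by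
  constructor
  · intro p hp
    rcases List.mem_append.1 hp with hp | hp
    · exact hL.1 p hp
    · simp at hp; subst hp; exact ⟨ha, hj⟩
  · rw [List.pairwise_append]
    exact ⟨hL.2, by simp, fun p hp q hq => by simp at hq; subst hq; exact h p hp⟩

theorem fl_snoc (L : List (W × ℕ)) (a : W) (j : ℕ) : fl (L ++ [(a, j)]) = fl L ++ pw a j := by
  simp [fl, pw]

include hC1 hC2 in
theorem wt_pw {x : Fin 2} {L : List (W × ℕ)} (hL : Good L) (hu : IsLyndon (x :: fl L)) {a : W}
    (ha : IsLyndon a) (h : ∀ p ∈ L, a < p.1) (hua : x :: fl L < a) (j : ℕ) :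
    wt C ((x :: fl L) ++ pw a j) = wt C (x :: fl L) * ((j.factorial : k)⁻¹ * cc C a ^ j) := by
  rcases Nat.eq_zero_or_pos j with rfl | hj
  · simp [pw]
  · have h1 := lyn_pw hu ha hua j
    have h2 : (x :: fl L) ++ pw a j = x :: fl (L ++ [(a,j)]) := by rw [fl_snoc]; rfl
    rw [h2] at h1 ⊢
    rw [wt_eq hC1 hC2 (good_snoc hL ha h hj) h1.1, wt_eq hC1 hC2 hL hu]
    simp [div_eq_inv_mul]

variable {E : W → R} (hE : HE E)

include hE in
theorem bracket {x : Fin 2} {w a : W} (hu : IsLyndon (x :: w)) (ha : IsLyndon a) (h : x :: w < a)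
    (hw : Suf (fun s => a ≤ s) w) : EE E ((x :: w) ++ a) = EE E (x :: w) * EE E a - EE E a * EE E (x :: w) := by
  unfold EE
  rw [hE (x :: w) a (lyn_append hu ha h).1 (by simp) ha (fun δ β' => standard ha hw δ β')]
  rw [monomial_mul_monomial, monomial_mul_monomial, List.length_append, add_comm a.length, map_sub]

include hE in
theorem Dd_EE {x : Fin 2} {w a : W} (hu : IsLyndon (x :: w)) (ha : IsLyndon a) (h : x :: w < a)
    (hw : Suf (fun s => a ≤ s) w) (r : k) (j : ℕ) :
    ((Dd k (r • EE E a)) ^ j) (EE E (x :: w)) = r ^ j • EE E ((x :: w) ++ pw a j) := by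
  induction j with
  | zero => simp [pw]
  | succ j ih =>
    rw [pow_succ', Module.End.mul_apply, ih, map_smul, Dd_apply]
    have h1 := lyn_pw hu ha h j
    rw [pw_succ', ← List.append_assoc]
    have h2 := bracket hE (x := x) (w := w ++ pw a j) h1.1 ha h1.2
      (suf_append (mono_le a) hw (suf_pw (mono_le a) ha (le_refl a) j))
    rw [← List.cons_append] at h2
    rw [h2, mul_smul_comm, smul_mul_assoc, ← smul_sub, smul_smul, pow_succ]

noncomputable def words (N : ℕ) : Finset W := (List.finite_length_le (Fin 2) N).toFinset

theorem mem_words {N : ℕ} {w : W} : w ∈ words N ↔ w.length ≤ N := by simp [words]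

open Classical in
noncomputable def DD (N : ℕ) (S : List W) : Finset W :=
  (words N).filter fun u => IsLyndon u ∧ u ∉ S ∧ ∃ x L, Good L ∧ u = x :: fl L ∧ ∀ p ∈ L, p.1 ∈ S

theorem mem_DD {N : ℕ} {S : List W} {u : W} : u ∈ DD N S ↔ u.length ≤ N ∧ IsLyndon u ∧ u ∉ S ∧
    ∃ x L, Good L ∧ u = x :: fl L ∧ ∀ p ∈ L, p.1 ∈ S := by
  simp [DD, mem_words]

noncomputable def VV (N : ℕ) (C : W → k) (E : W → R) (S : List W) : R[X] :=
  ∑ u ∈ DD N S, wt C u • EE E u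

/-- `S` is the list of the Lyndon words of length ≤ N above `a` -/
def Above (N : ℕ) (S : List W) (a : W) : Prop :=
  ∀ l, l ∈ S ↔ (IsLyndon l ∧ l.length ≤ N ∧ a < l)

theorem mem_DD_above {N : ℕ} {S : List W} {a : W} (hS : Above N S a) {u : W} :
    u ∈ DD N S ↔ u.length ≤ N ∧ IsLyndon u ∧ u ≤ a ∧
    ∃ x L, Good L ∧ u = x :: fl L ∧ ∀ p ∈ L, a < p.1 := by
  rw [mem_DD]
  constructor
  · rintro ⟨h1, h2, h3, x, L, h4, h5, h6⟩
    refine ⟨h1, h2, ?_, x, L, h4, h5, fun p hp => ((hS _).1 (h6 p hp)).2.2⟩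
    by_contra h
    exact h3 ((hS u).2 ⟨h2, h1, not_le.1 h⟩)
  · rintro ⟨h1, h2, h3, x, L, h4, h5, h6⟩
    refine ⟨h1, h2, fun h => absurd ((hS u).1 h).2.2 (not_lt.2 h3), x, L, h4, h5, fun p hp => ?_⟩
    refine (hS _).2 ⟨(h4.1 p hp).1, ?_, h6 p hp⟩
    refine le_trans ?_ h1
    rw [h5]
    have : p.1.length ≤ (fl L).length := by
      have hsub : List.Sublist (pw p.1 p.2) (fl L) :=
        List.sublist_flatten_of_mem (List.mem_map.2 ⟨p, hp, rfl⟩)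
      have := hsub.length_le
      rw [pw_length] at this
      exact le_trans (Nat.le_mul_of_pos_right _ (h4.1 p hp).2) this
    simp only [List.length_cons]; omega

theorem mem_DD_snoc {N : ℕ} {S : List W} {a : W} (hS : Above N S a) (ha : IsLyndon a)
    (haN : a.length ≤ N) {u : W} :
    u ∈ DD N (S ++ [a]) ↔ ∃ v j, v ∈ (DD N S).erase a ∧ u = v ++ pw a j ∧ u.length ≤ N := by
  constructor
  · intro hu
    rw [mem_DD] at hu
    obtain ⟨h1, h2, h3, x, L, h4, h5, h6⟩ := hu
    have hua : u < a := by
      by_contra h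
      rcases eq_or_lt_of_le (not_lt.1 h) with h | h
      · exact h3 (by simp [h])
      · exact h3 (by simp [(hS u).2 ⟨h2, h1, h⟩])
    by_cases hall : ∀ p ∈ L, p.1 ∈ S
    · refine ⟨u, 0, ?_, by simp [pw], h1⟩
      rw [mem_erase, mem_DD]
      exact ⟨ne_of_lt hua, h1, h2, fun h => h3 (by simp [h]), x, L, h4, h5, hall⟩
    · -- last factor is a
      rcases List.eq_nil_or_concat L with rfl | ⟨L', q, rfl⟩
      · simp at hall
      rw [List.concat_eq_append] at *
      have hpw := List.pairwise_append.1 h4.2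
      have hq : q.1 = a := by
        push Not at hall
        obtain ⟨p, hp, hpS⟩ := hall
        have hpa : p.1 = a := by
          have := h6 p hp
          simp [hpS] at this; exact this
        rcases List.mem_append.1 hp with hp | hp
        · exfalso
          have h7 := hpw.2.2 p hp q (by simp)
          rw [hpa] at h7
          have h8 := h6 q (by simp)
          rcases List.mem_append.1 h8 with h8 | h8
          · exact absurd (((hS _).1 h8).2.2.trans h7) (lt_irrefl _)
          · simp at h8; rw [h8] at h7; exact absurd h7 (lt_irrefl _)
        · simp at hp; rw [← hp]; exact hpa
      obtain ⟨q1, j⟩ := q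
      simp at hq
      subst hq
      have hbig : ∀ p ∈ L', q1 < p.1 := fun p hp => hpw.2.2 p hp (q1, j) (by simp)
      have hgood : Good L' := ⟨fun p hp => h4.1 p (by simp [hp]), hpw.1⟩
      have hu' : u = (x :: fl L') ++ pw q1 j := by rw [h5, fl_snoc]; rfl
      have hlt : x :: fl L' < q1 := lt_of_le_of_lt (le_append _ (pw q1 j)) (hu' ▸ hua)
      refine ⟨x :: fl L', j, ?_, hu', h1⟩
      rw [mem_erase, mem_DD_above hS]
      refine ⟨ne_of_lt hlt, ?_, ?_, le_of_lt hlt, x, L', hgood, rfl, hbig⟩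
      · refine le_trans ?_ h1
        rw [hu']; simp
      · exact lyn_of_lt L' [x] (lyn_single x) (fun p hp => (hgood.1 p hp).1)
          (fun p hp => hlt.trans (hbig p hp))
  · rintro ⟨v, j, hv, rfl, hlen⟩
    rw [mem_erase, mem_DD_above hS] at hv
    obtain ⟨hva, h1, h2, h3, x, L, h4, rfl, h6⟩ := hv
    have hlt := lt_of_le_of_ne h3 hva
    have hl := lyn_pw h2 ha hlt j
    rw [mem_DD]
    have hin : ∀ p ∈ L, p.1 ∈ S := by
      obtain ⟨_, _, _, x', L', g1, g2, g3⟩ := mem_DD.1 ((mem_DD_above hS).2 ⟨h1, h2, h3, x, L, h4, rfl, h6⟩)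
      intro p hp
      refine (hS _).2 ⟨(h4.1 p hp).1, ?_, h6 p hp⟩
      refine le_trans ?_ h1
      have hsub : List.Sublist (pw p.1 p.2) (fl L) :=
        List.sublist_flatten_of_mem (List.mem_map.2 ⟨p, hp, rfl⟩)
      have := hsub.length_le
      rw [pw_length] at this
      have h7 := le_trans (Nat.le_mul_of_pos_right _ (h4.1 p hp).2) this
      simp only [List.length_cons]; omega
    refine ⟨hlen, hl.1, ?_, ?_⟩
    · intro hmem
      rcases List.mem_append.1 hmem with hm | hm
      · exact absurd (((hS _).1 hm).2.2.trans hl.2) (lt_irrefl _)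
      · rw [List.mem_singleton] at hm; rw [hm] at hl; exact absurd hl.2 (lt_irrefl _)
    · rcases Nat.eq_zero_or_pos j with rfl | hj
      · exact ⟨x, L, h4, by simp [pw], fun p hp => by simp [hin p hp]⟩
      · refine ⟨x, L ++ [(a,j)], good_snoc h4 ha h6 hj, by rw [fl_snoc]; rfl, fun p hp => ?_⟩
        rcases List.mem_append.1 hp with hp | hp
        · simp [hin p hp]
        · simp at hp; simp [hp]

theorem a_mem {N : ℕ} {S : List W} {a : W} (hS : Above N S a) (ha : IsLyndon a)
    (haN : a.length ≤ N) : a ∈ DD N S := by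
  rw [mem_DD_above hS]
  refine ⟨haN, ha, le_refl _, ?_⟩
  rcases a with _ | ⟨x, w⟩
  · exact absurd rfl ha.1
  · obtain ⟨L, hL, rfl⟩ := exists_good w
    exact ⟨x, L, hL, rfl, tail_factors ha L hL rfl⟩

include hC1 hC2 hE in
theorem step_sum {N : ℕ} {S : List W} {a : W} (hS : Above N S a) (ha : IsLyndon a)
    (haN : a.length ≤ N) :
    Eqv N (∑ u ∈ (DD N S).erase a, wt C u •
        ∑ j ∈ range (N+1), ((j.factorial : k)⁻¹) • ((Dd k (cc C a • EE E a)) ^ j) (EE E u))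
      (VV N C E (S ++ [a])) := by
  have h1 : ∑ u ∈ (DD N S).erase a, wt C u •
        ∑ j ∈ range (N+1), ((j.factorial : k)⁻¹) • ((Dd k (cc C a • EE E a)) ^ j) (EE E u) =
      ∑ q ∈ (DD N S).erase a ×ˢ range (N+1), wt C (q.1 ++ pw a q.2) • EE E (q.1 ++ pw a q.2) := by
    rw [Finset.sum_product]
    refine Finset.sum_congr rfl fun u hu => ?_
    rw [smul_sum]
    refine Finset.sum_congr rfl fun j _ => ?_
    rw [mem_erase, mem_DD_above hS] at hu
    obtain ⟨hva, h1, h2, h3, x, L, h4, rfl, h6⟩ := hu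
    have hlt := lt_of_le_of_ne h3 hva
    rw [Dd_EE hE h2 ha hlt (suf_fl (mono_le a) L fun p hp => ⟨(h4.1 p hp).1, le_of_lt (h6 p hp)⟩),
      wt_pw hC1 hC2 h4 h2 ha h6 hlt j, smul_smul, smul_smul, mul_assoc]
  rw [h1, ← Finset.sum_filter_add_sum_filter_not _ (fun q : W × ℕ => (q.1 ++ pw a q.2).length ≤ N)]
  have h2 : ∑ q ∈ ((DD N S).erase a ×ˢ range (N+1)).filter (fun q : W × ℕ => (q.1 ++ pw a q.2).length ≤ N),
      wt C (q.1 ++ pw a q.2) • EE E (q.1 ++ pw a q.2) = VV N C E (S ++ [a]) := by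
    unfold VV
    refine Finset.sum_bij (fun q _ => q.1 ++ pw a q.2) ?_ ?_ ?_ (fun _ _ => rfl)
    · intro q hq
      simp only [mem_filter, mem_product] at hq
      exact (mem_DD_snoc hS ha haN).2 ⟨q.1, q.2, hq.1.1, rfl, hq.2⟩
    · rintro ⟨u, i⟩ hu ⟨v, j⟩ hv e
      simp only [mem_filter, mem_product] at hu hv e
      have hu := hu.1.1
      have hv := hv.1.1
      rw [mem_erase, mem_DD_above hS] at hu hv
      obtain ⟨hva, h1, h2, h3, x, L, h4, rfl, h6⟩ := hu
      obtain ⟨hva', h1', h2', h3', x', L', h4', rfl, h6'⟩ := hv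
      have hji := inj_aux ha (suf_fl (mono_lt a) L fun p hp => ⟨(h4.1 p hp).1, h6 p hp⟩)
        (by simp) i j e
      have hij := inj_aux ha (suf_fl (mono_lt a) L' fun p hp => ⟨(h4'.1 p hp).1, h6' p hp⟩)
        (by simp) j i e.symm
      have : i = j := le_antisymm hij hji
      subst this
      have := List.append_cancel_right e
      rw [this]
    · intro u hu
      obtain ⟨v, j, hv, rfl, hlen⟩ := (mem_DD_snoc hS ha haN).1 hu
      refine ⟨(v, j), ?_, rfl⟩
      simp only [mem_filter, mem_product, mem_range]
      refine ⟨⟨hv, ?_⟩, hlen⟩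
      rw [List.length_append, pw_length] at hlen
      have : 1 ≤ a.length := List.length_pos_iff.2 ha.1
      nlinarith
  rw [h2]
  unfold Eqv
  rw [add_sub_cancel_left]
  refine Finset.dvd_sum fun q hq => ?_
  rw [mem_filter] at hq
  exact dvd_smul' _ (dvd_monomial (by omega) _)

include hC1 hC2 hE in
theorem step {N : ℕ} {S : List W} {a : W} (hS : Above N S a) (ha : IsLyndon a)
    (haN : a.length ≤ N) :
    Eqv N (VV N C E S * ex k N (cc C a • EE E a))
      (θ (ex k N (cc C a • EE E a)) + ex k N (cc C a • EE E a) * VV N C E (S ++ [a])) := by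
  have hpos : 1 ≤ a.length := List.length_pos_iff.2 ha.1
  have hY : cc C a • EE E a = monomial a.length (cc C a • E a) := by rw [EE, smul_monomial]
  have hXY : X ∣ cc C a • EE E a := by
    rw [hY]; simpa using dvd_monomial (R := R) hpos (cc C a • E a)
  have h1 : VV N C E S = (a.length : k) • (cc C a • EE E a) +
      ∑ u ∈ (DD N S).erase a, wt C u • EE E u := by
    rw [VV, ← Finset.add_sum_erase _ _ (a_mem hS ha haN), wt, smul_smul]
  rw [h1, add_mul]
  refine Eqv.add ?_ ?_
  · rw [smul_mul_assoc, hY]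
    exact (ex_deriv N a.length hpos _).symm
  · refine Eqv.trans ?_ (Eqv.mul_left _ (step_sum hC1 hC2 hE hS ha haN))
    rw [sum_mul, mul_sum]
    unfold Eqv
    rw [← sum_sub_distrib]
    refine Finset.dvd_sum fun u _ => ?_
    rw [smul_mul_assoc, mul_smul_comm, ← smul_sub]
    exact dvd_smul' _ (ex_conj N _ _ hXY)

noncomputable def KK (N : ℕ) (C : W → k) (E : W → R) (S : List W) : R[X] :=
  (S.map fun l => ex k N (cc C l • EE E l)).prod

include hC1 hC2 hE in
theorem main_ode {N : ℕ} (hN : 1 ≤ N) (Sall : List W)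
    (hS : ∀ l, l ∈ Sall ↔ (IsLyndon l ∧ l.length ≤ N ∧ l ≠ [0]))
    (hp : Sall.Pairwise (fun a b => b < a)) (pre suf : List W) (he : Sall = pre ++ suf) :
    Eqv N (θ (KK N C E pre))
      ((EE E [0] + EE E [1]) * KK N C E pre - KK N C E pre * VV N C E pre) := by
  induction pre using List.reverseRecOn generalizing suf with
  | nil =>
    apply Eqv.of_eq
    have h1 : DD N [] = {[0], [1]} := by
      ext u
      rw [mem_DD]
      simp only [List.not_mem_nil, not_false_eq_true, true_and, mem_insert, mem_singleton]
      constructor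
      · rintro ⟨_, _, x, L, h1, h2, h3⟩
        have : L = [] := List.eq_nil_iff_forall_not_mem.2 h3
        subst this
        simp only [fl, List.map_nil, List.flatten_nil] at h2
        subst h2
        fin_cases x <;> simp
      · rintro (rfl | rfl)
        · exact ⟨by simpa using hN, lyn_single 0, 0, [], ⟨by simp, by simp⟩, by simp [fl], by simp⟩
        · exact ⟨by simpa using hN, lyn_single 1, 1, [], ⟨by simp, by simp⟩, by simp [fl], by simp⟩
    rw [VV, h1, Finset.sum_pair (by decide)]
    simp [KK, θ, wt, cc, hC1]
  | append_singleton pre a ih =>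
    have ha := (hS a).1 (by simp [he])
    have hab : Above N pre a := by
      intro l
      rw [he, List.pairwise_append, List.pairwise_append] at hp
      constructor
      · intro hl
        have h1 := (hS l).1 (by simp [he, hl])
        exact ⟨h1.1, h1.2.1, hp.1.2.2 l hl a (by simp)⟩
      · rintro ⟨h1, h2, h3⟩
        have h4 : l ∈ Sall := (hS l).2 ⟨h1, h2, fun h => by
          have := lyn_ge_zero ha.1
          rw [h] at h3
          exact absurd (lt_of_lt_of_le h3 this) (lt_irrefl _)⟩
        rw [he] at h4
        simp only [List.mem_append, List.mem_singleton] at h4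
        rcases h4 with (h4 | h4) | h4
        · exact h4
        · rw [h4] at h3; exact absurd h3 (lt_irrefl _)
        · have := hp.2.2 a (by simp) l h4
          exact absurd (this.trans h3) (lt_irrefl _)
    have h0 := ih (a :: suf) (by simp [he])
    have hst := step hC1 hC2 hE hab ha.1 ha.2.1
    have hK : KK N C E (pre ++ [a]) = KK N C E pre * ex k N (cc C a • EE E a) := by
      simp [KK]
    rw [hK, θ_mul]
    refine Eqv.trans (Eqv.add (Eqv.mul_right _ h0) (Eqv.refl _ _)) ?_
    have h2 := Eqv.sub (Eqv.refl N ((EE E [0] + EE E [1]) * (KK N C E pre * ex k N (cc C a • EE E a)) +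
      KK N C E pre * θ (ex k N (cc C a • EE E a)))) (Eqv.mul_left (KK N C E pre) hst)
    refine Eqv.trans (Eqv.of_eq ?_) (Eqv.trans h2 (Eqv.of_eq ?_))
    · noncomm_ring
    · noncomm_ring

include hC1 hC2 hE in
theorem main_rec {N : ℕ} (hN : 1 ≤ N) (S : List W)
    (hS : ∀ l, l ∈ S ↔ (IsLyndon l ∧ l.length ≤ N ∧ l ≠ [0]))
    (hp : S.Pairwise (fun a b => b < a)) (n : ℕ) (hn : n + 1 ≤ N) :
    ((n + 1 : ℕ) : R) * (KK N C E S).coeff (n+1) = E [1] * (KK N C E S).coeff n +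
      E [0] * (KK N C E S).coeff n - (KK N C E S).coeff n * E [0] := by
  have h := main_ode hC1 hC2 hE hN S hS hp S [] (by simp)
  have hV : VV N C E S = EE E [0] := by
    have h1 : DD N S = {[0]} := by
      ext u
      rw [mem_DD, mem_singleton]
      constructor
      · rintro ⟨h1, h2, h3, _⟩
        by_contra h4
        exact h3 ((hS u).2 ⟨h2, h1, h4⟩)
      · rintro rfl
        exact ⟨by simpa using hN, lyn_single 0, fun h => ((hS _).1 h).2.2 rfl, 0, [],
          ⟨by simp, by simp⟩, by simp [fl], by simp⟩
    rw [VV, h1, Finset.sum_singleton]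
    simp [wt, cc, hC1]
  rw [hV] at h
  have h2 := h.coeff hn
  rw [θ_coeff] at h2
  rw [h2, coeff_sub, add_mul, coeff_add]
  have h3 : ∀ x : Fin 2, EE E [x] = monomial 1 (E [x]) := fun x => rfl
  rw [h3, h3, coeff_monomial_mul, coeff_monomial_mul, coeff_mul_monomial, add_comm (E [1] * _)]

end core
end LS
namespace LS
open Polynomial Finset
set_option linter.unusedSectionVars false

section expand
variable {k R : Type*} [Field k] [CharZero k] [Ring R] [Algebra k R]

def push (l : W) (q : ℕ × List (W × ℕ)) : List (W × ℕ) :=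
  if q.1 = 0 then q.2 else (l, q.1) :: q.2

def TT (N : ℕ) : List W → Finset (List (W × ℕ))
  | [] => {[]}
  | l :: S => (range (N+1) ×ˢ TT N S).image (push l)

theorem mem_TT {N : ℕ} (S : List W) (hS : S.Pairwise (fun a b => b < a)) (L : List (W × ℕ)) :
    L ∈ TT N S ↔ (∀ p ∈ L, p.1 ∈ S ∧ 1 ≤ p.2 ∧ p.2 ≤ N) ∧ L.Pairwise (fun p q => q.1 < p.1) := by
  induction S generalizing L with
  | nil =>
    simp only [TT, mem_singleton]
    constructor
    · rintro rfl; simp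
    · rintro ⟨h, _⟩
      refine List.eq_nil_iff_forall_not_mem.2 fun p hp => ?_
      simpa using (h p hp).1
  | cons l S ih =>
    have hS' := List.pairwise_cons.1 hS
    simp only [TT, mem_image, mem_product, mem_range, Prod.exists]
    constructor
    · rintro ⟨t, L', ⟨ht, hL'⟩, rfl⟩
      rw [ih hS'.2] at hL'
      unfold push
      split_ifs with h
      · exact ⟨fun p hp => ⟨by simp [(hL'.1 p hp).1], (hL'.1 p hp).2⟩, hL'.2⟩
      · refine ⟨?_, List.pairwise_cons.2 ⟨fun p hp => hS'.1 _ (hL'.1 p hp).1, hL'.2⟩⟩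
        intro p hp
        rcases List.mem_cons.1 hp with rfl | hp
        · simp at h ⊢; omega
        · exact ⟨by simp [(hL'.1 p hp).1], (hL'.1 p hp).2⟩
    · rintro ⟨h1, h2⟩
      by_cases hl : ∃ t L', L = (l, t) :: L'
      · obtain ⟨t, L', rfl⟩ := hl
        have h3 := h1 (l,t) (by simp)
        simp only at h3
        rw [List.pairwise_cons] at h2
        refine ⟨t, L', ⟨by omega, ?_⟩, ?_⟩
        · rw [ih hS'.2]
          refine ⟨fun p hp => ⟨?_, (h1 p (by simp [hp])).2⟩, h2.2⟩
          have h4 := (h1 p (by simp [hp])).1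
          rcases List.mem_cons.1 h4 with h4 | h4
          · have := h2.1 p hp
            rw [h4] at this; exact absurd this (lt_irrefl _)
          · exact h4
        · unfold push; rw [if_neg (by simp; omega)]
      · refine ⟨0, L, ⟨by omega, ?_⟩, by simp [push]⟩
        rw [ih hS'.2]
        refine ⟨fun p hp => ⟨?_, (h1 p hp).2⟩, h2⟩
        rcases L with _ | ⟨q, L⟩
        · simp at hp
        · have hq : q.1 ∈ S := by
            rcases List.mem_cons.1 (h1 q (by simp)).1 with h | h
            · exact absurd ⟨q.2, L, by rw [← h]⟩ hl
            · exact h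
          rw [List.pairwise_cons] at h2
          rcases List.mem_cons.1 hp with rfl | hp'
          · exact hq
          · rcases List.mem_cons.1 (h1 p hp).1 with h | h
            · have h5 := h2.1 p hp'
              rw [h] at h5
              exact absurd (h5.trans (hS'.1 _ hq)) (lt_irrefl _)
            · exact h

theorem push_inj {N : ℕ} {l : W} {S : List W} (hS : (l :: S).Pairwise (fun a b => b < a)) :
    Set.InjOn (push l) (range (N+1) ×ˢ TT N S : Finset (ℕ × List (W × ℕ))) := by
  have hS' := List.pairwise_cons.1 hS
  rintro ⟨t, L⟩ h1 ⟨t', L'⟩ h2 e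
  simp only [coe_product, Set.mem_prod, mem_coe, mem_TT S hS'.2] at h1 h2
  have hno : ∀ (L : List (W × ℕ)) (t : ℕ) (L' : List (W × ℕ)),
      (∀ p ∈ L, p.1 ∈ S ∧ 1 ≤ p.2 ∧ p.2 ≤ N) → L ≠ (l, t) :: L' := by
    rintro L t L' h rfl
    exact absurd (hS'.1 l (h (l,t) (by simp)).1) (lt_irrefl _)
  unfold push at e
  simp only at e
  split_ifs at e with h h' h'
  · rw [h, h', e]
  · exact absurd e (hno _ _ _ h1.2.1)
  · exact absurd e.symm (hno _ _ _ h2.2.1)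
  · simp at e; rw [e.1, e.2]

variable (k) in
noncomputable def trm {Q : Type*} [Ring Q] [Algebra k Q] (c : W → k) (E : W → Q) (L : List (W × ℕ)) : Q :=
  (L.map fun p => ((p.2.factorial : k)⁻¹) • (c p.1 • E p.1) ^ p.2).prod

theorem trm_push {Q : Type*} [Ring Q] [Algebra k Q] (c : W → k) (E : W → Q) (l : W)
    (q : ℕ × List (W × ℕ)) :
    trm k c E (push l q) = ((q.1.factorial : k)⁻¹ • (c l • E l) ^ q.1) * trm k c E q.2 := by
  unfold push
  split_ifs with h
  · rw [h]; simp
  · simp [trm]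

theorem KK_expand (N : ℕ) (C : W → k) (E : W → R) (S : List W) (hS : S.Pairwise (fun a b => b < a)) :
    KK N C E S = ∑ L ∈ TT N S, trm k (cc C) (EE E) L := by
  induction S with
  | nil => simp [KK, TT, trm]
  | cons l S ih =>
    have h1 : KK N C E (l :: S) = ex k N (cc C l • EE E l) * KK N C E S := by simp [KK]
    rw [h1, ih (List.pairwise_cons.1 hS).2, ex, sum_mul_sum, TT, Finset.sum_image (push_inj hS),
      Finset.sum_product]
    simp only [trm_push]

def wsum (f : W → ℕ) (L : List (W × ℕ)) : ℕ := (L.map fun p => p.2 * f p.1).sum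

theorem trm_monomial (c : W → k) (E : W → R) (f : W → ℕ) (L : List (W × ℕ)) :
    trm k c (fun u => (monomial (f u) (E u) : R[X])) L = monomial (wsum f L) (trm k c E L) := by
  induction L with
  | nil => simp [trm, wsum]
  | cons p L ih =>
    have h1 : trm k c (fun u => (monomial (f u) (E u) : R[X])) (p :: L) =
      ((p.2.factorial : k)⁻¹ • (c p.1 • (monomial (f p.1) (E p.1) : R[X])) ^ p.2) *
        trm k c (fun u => (monomial (f u) (E u) : R[X])) L := by simp [trm]
    rw [h1, ih, smul_monomial, monomial_pow, smul_monomial, monomial_mul_monomial]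
    simp [trm, wsum, mul_comm]

theorem length_eq (w : W) : w.length = w.count 0 + w.count 1 := by
  induction w with
  | nil => rfl
  | cons x w ih => fin_cases x <;> simp [ih] <;> omega

theorem wsum_add (L : List (W × ℕ)) :
    wsum List.length L = wsum (List.count 0) L + wsum (List.count 1) L := by
  induction L with
  | nil => rfl
  | cons p L ih =>
    simp only [wsum, List.map_cons, List.sum_cons] at *
    rw [ih, length_eq]; ring

theorem le_wsum (f : W → ℕ) {L : List (W × ℕ)} {p : W × ℕ} (hp : p ∈ L) : p.2 * f p.1 ≤ wsum f L :=
  List.single_le_sum (by simp) _ (List.mem_map.2 ⟨p, hp, rfl⟩)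

theorem trm_eq (c : W → k) (E : W → R) (L : List (W × ℕ)) :
    trm k c E L = ((L.map fun p => (p.2.factorial : k)).prod)⁻¹ • (L.map fun p => (c p.1 • E p.1) ^ p.2).prod := by
  induction L with
  | nil => simp [trm]
  | cons p L ih =>
    have h1 : trm k c E (p :: L) = ((p.2.factorial : k)⁻¹ • (c p.1 • E p.1) ^ p.2) * trm k c E L := by
      simp [trm]
    rw [h1, ih, smul_mul_smul_comm]
    simp [mul_comm]

theorem KK_zero (N : ℕ) (C : W → k) (E : W → R) (S : List W) (hS : ∀ l ∈ S, l ≠ []) :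
    (KK N C E S).coeff 0 = 1 := by
  induction S with
  | nil => simp [KK]
  | cons l S ih =>
    have h1 : KK N C E (l :: S) = ex k N (cc C l • EE E l) * KK N C E S := by simp [KK]
    rw [h1, mul_coeff_zero, ih (fun q hq => hS q (by simp [hq])), mul_one, ex, Finset.sum_range_succ',
      coeff_add, finsetSum_coeff, Finset.sum_eq_zero]
    · simp
    · intro t _
      have : l.length ≠ 0 := fun h => hS l (by simp) (List.length_eq_zero_iff.1 h)
      rw [EE, smul_monomial, monomial_pow, smul_monomial, coeff_monomial, if_neg]
      simp; tauto

end expand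

open Classical in
theorem final {k : Type*} [Field k] [CharZero k]
    (E : W → FreeAlgebra k (Fin 2))
    (hE1 : ∀ x : Fin 2, E [x] = FreeAlgebra.ι k x)
    (hE2 : HE E)
    (C : W → k)
    (hC1 : ∀ x : Fin 2, C [x] = 1)
    (hC2 : HC2 C)
    (B : ℕ → ℕ → FreeAlgebra k (Fin 2))
    (hB00 : B 0 0 = 1)
    (hB0 : ∀ n : ℕ, 0 < n → B n 0 = 0)
    (hBgt : ∀ n m : ℕ, n < m → B n m = 0)
    (hBrec : ∀ n m : ℕ,
      B (n + 1) (m + 1) = E [1] * B n m + E [0] * B n (m + 1) - B n (m + 1) * E [0])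
    (n m : ℕ) :
    B n m =
      ∑ᶠ T ∈ {T : ℕ × List (List (Fin 2) × ℕ) |
          (∀ p ∈ T.2, IsLyndon p.1 ∧ 1 ≤ p.2 ∧
            List.Lex (· < ·) [(0 : Fin 2)] p.1 ∧ List.Lex (· < ·) p.1 [(1 : Fin 2)]) ∧
          T.2.IsChain (fun p q => List.Lex (· < ·) q.1 p.1) ∧
          T.1 + (T.2.map fun p => p.2 * p.1.count 1).sum = m ∧
          (T.2.map fun p => p.2 * p.1.count 0).sum + m = n},
        ((n.factorial : k) /
            ((T.1.factorial : k) * (T.2.map fun p => (p.2.factorial : k)).prod)) •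
          (E [1] ^ T.1 *
            (T.2.map fun p => ((C p.1 / (p.1.length.factorial : k)) • E p.1) ^ p.2).prod) := by
  set N := n + 1 with hN
  set S' : List W := Finset.sort ((words N).filter fun l => IsLyndon l ∧ [0] < l ∧ l < [1]) (· ≥ ·) with hS'
  have memS' : ∀ l, l ∈ S' ↔ l.length ≤ N ∧ IsLyndon l ∧ [0] < l ∧ l < [1] := by
    intro l; rw [hS', Finset.mem_sort, mem_filter, mem_words]
  have sortS' : S'.Pairwise (fun a b => b < a) := by
    have := Finset.sortedGT_sort ((words N).filter fun l => IsLyndon l ∧ [0] < l ∧ l < [1])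
    exact this.pairwise
  have sortS : ([1] :: S').Pairwise (fun a b : W => b < a) :=
    List.pairwise_cons.2 ⟨fun l hl => ((memS' l).1 hl).2.2.2, sortS'⟩
  have memS : ∀ l, l ∈ [1] :: S' ↔ (IsLyndon l ∧ l.length ≤ N ∧ l ≠ [0]) := by
    intro l
    rw [List.mem_cons, memS']
    constructor
    · rintro (rfl | ⟨h1, h2, h3, h4⟩)
      · exact ⟨lyn_single 1, by simp [hN], by decide⟩
      · exact ⟨h2, h1, ne_of_gt h3⟩
    · rintro ⟨h1, h2, h3⟩
      by_cases h : l = [1]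
      · exact Or.inl h
      · exact Or.inr ⟨h2, h1, lt_of_le_of_ne (lyn_ge_zero h1) (Ne.symm h3),
          lt_of_le_of_ne (lyn_le_one h1) h⟩
  set E' : W → (FreeAlgebra k (Fin 2))[X] := fun u => monomial (u.count 1) (E u) with hE'
  have HE' : HE E' := by
    intro αL αR h1 h2 h3 h4
    simp only [hE']
    rw [hE2 αL αR h1 h2 h3 h4, monomial_mul_monomial, monomial_mul_monomial, List.count_append,
      add_comm (List.count 1 αR), map_sub]
  set K := KK N C E' ([1] :: S') with hK
  have hB' : ∀ j, j ≤ N → ∀ i, ((j.factorial : k) • K.coeff j).coeff i = B j i := by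
    intro j
    induction j with
    | zero =>
      intro _ i
      rw [hK, KK_zero N C E' _ (fun l hl => ((memS l).1 hl).1.1)]
      rcases i with _ | i
      · simp [hB00]
      · rw [hBgt 0 (i+1) (by omega)]; simp [coeff_one]
    | succ j ih =>
      intro hj i
      have hrec := main_rec hC1 hC2 HE' (by omega : 1 ≤ N) _ memS sortS j hj
      rw [← hK] at hrec
      have hsm : (((j+1).factorial : k) • K.coeff (j+1)) =
          (j.factorial : k) • (((j + 1 : ℕ) : (FreeAlgebra k (Fin 2))[X]) * K.coeff (j+1)) := by
        rw [Nat.factorial_succ, Nat.cast_mul, mul_comm, mul_smul]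
        congr 1
        rw [Algebra.smul_def]; simp
      rw [hsm, hrec, smul_sub, smul_add, ← mul_smul_comm, ← mul_smul_comm, ← smul_mul_assoc]
      have hE1' : E' [1] = monomial 1 (E [1]) := by simp [hE']
      have hE0' : E' [0] = Polynomial.C (E [0]) := by simp [hE']
      rw [hE1', hE0', coeff_sub, coeff_add, coeff_C_mul, coeff_mul_C, ih (by omega)]
      rcases i with _ | i
      · rw [hB0 (j+1) (by omega), mul_coeff_zero, coeff_monomial, if_neg (by omega), zero_mul, zero_add]
        rcases Nat.eq_zero_or_pos j with rfl | hj
        · simp [hB00]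
        · simp [hB0 j hj]
      · rw [coeff_monomial_mul, ih (by omega), hBrec]
  have hKexp : K.coeff n = ∑ q ∈ range (N+1) ×ˢ TT N S',
      if q.1 + wsum List.length q.2 = n then
        (monomial (q.1 + wsum (List.count 1) q.2)
          (((q.1.factorial : k)⁻¹ • E [1] ^ q.1) * trm k (cc C) E q.2)) else 0 := by
    rw [hK, KK_expand N C E' _ sortS, TT, Finset.sum_image (push_inj sortS), finsetSum_coeff]
    refine Finset.sum_congr rfl fun q _ => ?_
    have h1 : trm k (cc C) (EE E') q.2 = monomial (wsum List.length q.2)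
      (monomial (wsum (List.count 1) q.2) (trm k (cc C) E q.2)) := by
      have := trm_monomial (cc C) E' List.length q.2
      rw [← trm_monomial (cc C) E (List.count 1) q.2, ← this]; rfl
    have h2 : cc C [1] = 1 := by simp [cc, hC1]
    have h3 : EE E' [1] = monomial 1 (monomial 1 (E [1])) := by simp [EE, hE']
    rw [trm_push, h1, h2, h3, one_smul, monomial_pow, monomial_pow, smul_monomial, smul_monomial,
      monomial_mul_monomial, monomial_mul_monomial, coeff_monomial, one_mul]
  rw [← hB' n (by omega) m, hKexp]
  have hset : {T : ℕ × List (List (Fin 2) × ℕ) |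
          (∀ p ∈ T.2, IsLyndon p.1 ∧ 1 ≤ p.2 ∧
            List.Lex (· < ·) [(0 : Fin 2)] p.1 ∧ List.Lex (· < ·) p.1 [(1 : Fin 2)]) ∧
          T.2.IsChain (fun p q => List.Lex (· < ·) q.1 p.1) ∧
          T.1 + (T.2.map fun p => p.2 * p.1.count 1).sum = m ∧
          (T.2.map fun p => p.2 * p.1.count 0).sum + m = n} =
      ((range (N+1) ×ˢ TT N S').filter fun q => q.1 + wsum List.length q.2 = n ∧
        q.1 + wsum (List.count 1) q.2 = m : Finset (ℕ × List (W × ℕ))) := by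
    ext ⟨t, L⟩
    simp only [Set.mem_setOf_eq, coe_filter, mem_product, mem_range, mem_TT S' sortS', chain_iff]
    have hw := wsum_add L
    have e1 : (L.map fun p => p.2 * p.1.count 1).sum = wsum (List.count 1) L := rfl
    have e0 : (L.map fun p => p.2 * p.1.count 0).sum = wsum (List.count 0) L := rfl
    rw [e1, e0]
    constructor
    · rintro ⟨h1, h2, h3, h4⟩
      refine ⟨⟨by omega, ⟨fun p hp => ?_, h2⟩⟩, by omega, h3⟩
      obtain ⟨g1, g2, g3, g4⟩ := h1 p hp
      have g5 := le_wsum List.length hp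
      have g6 : 1 ≤ p.1.length := List.length_pos_iff.2 g1.1
      refine ⟨(memS' _).2 ⟨?_, g1, g3, g4⟩, g2, ?_⟩
      · have := Nat.le_mul_of_pos_left p.1.length g2
        omega
      · have := Nat.le_mul_of_pos_right p.2 g6
        omega
    · rintro ⟨⟨h1, h2, h3⟩, h4, h5⟩
      refine ⟨fun p hp => ?_, h3, h5, by omega⟩
      obtain ⟨g1, g2, g3⟩ := h2 p hp
      have := (memS' _).1 g1
      exact ⟨this.2.1, g2, this.2.2.1, this.2.2.2⟩
  rw [hset, finsum_mem_coe_finset, Finset.sum_filter, coeff_smul, finsetSum_coeff, smul_sum]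
  refine Finset.sum_congr rfl fun q _ => ?_
  by_cases h1 : q.1 + wsum List.length q.2 = n
  · by_cases h2 : q.1 + wsum (List.count 1) q.2 = m
    · rw [if_pos h1, if_pos ⟨h1, h2⟩, coeff_monomial, if_pos h2, trm_eq, smul_mul_smul_comm, smul_smul,
        div_eq_mul_inv, mul_inv]
      rfl
    · rw [if_pos h1, if_neg (fun h => h2 h.2), coeff_monomial, if_neg h2, smul_zero]
  · rw [if_neg h1, if_neg (fun h => h1 h.1)]; simp

end LS

/-- Corollary `cor:Bell-diff-poly-by-LS-basis`: expression of the partial Bell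
differential polynomials `B_{n,m}` in the Lyndon–Shirshov basis.  The alphabet
`{1 ≺ 2}` is `Fin 2` (letter `1` is `0`, letter `2` is `1`); `E` and `C` are the
Lyndon–Shirshov basis and coefficient function, and `B` the partial Bell
differential polynomials, all characterized by the stated hypotheses.  The sum
over tuples `2 ≻ α₁ ≻ ⋯ ≻ α_r ≻ 1` with multiplicities `t₁, …, t_r ≥ 1` and a
power `E(2)^{t₀}` is encoded by pairs `(t₀, L)`. -/
theorem stmt_19 (k : Type*) [Field k] [CharZero k]
    (E : List (Fin 2) → FreeAlgebra k (Fin 2))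
    (hE1 : ∀ x : Fin 2, E [x] = FreeAlgebra.ι k x)
    (hE2 : ∀ αL αR : List (Fin 2), IsLyndon (αL ++ αR) → αL ≠ [] → IsLyndon αR →
      (∀ δ β' : List (Fin 2), αL ++ αR = β' ++ δ → β' ≠ [] → IsLyndon δ →
        δ.length ≤ αR.length) →
      E (αL ++ αR) = E αL * E αR - E αR * E αL)
    (C : List (Fin 2) → k)
    (hC1 : ∀ x : Fin 2, C [x] = 1)
    (hC2 : ∀ (x : Fin 2) (w : List (Fin 2)) (L : List (List (Fin 2) × ℕ)),
      IsLyndon (x :: w) → w ≠ [] →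
      (∀ p ∈ L, IsLyndon p.1 ∧ 1 ≤ p.2) →
      L.Chain' (fun p q => List.Lex (· < ·) q.1 p.1) →
      (L.map fun p => (List.replicate p.2 p.1).flatten).flatten = w →
      C (x :: w) =
        (w.length.factorial : k) /
            (L.map fun p => (p.1.length.factorial : k) ^ p.2 * (p.2.factorial : k)).prod *
          (L.map fun p => C p.1 ^ p.2).prod)
    (B : ℕ → ℕ → FreeAlgebra k (Fin 2))
    (hB00 : B 0 0 = 1)
    (hB0 : ∀ n : ℕ, 0 < n → B n 0 = 0)
    (hBgt : ∀ n m : ℕ, n < m → B n m = 0)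
    (hBrec : ∀ n m : ℕ,
      B (n + 1) (m + 1) = E [1] * B n m + E [0] * B n (m + 1) - B n (m + 1) * E [0])
    (n m : ℕ) :
    B n m =
      ∑ᶠ T ∈ {T : ℕ × List (List (Fin 2) × ℕ) |
          (∀ p ∈ T.2, IsLyndon p.1 ∧ 1 ≤ p.2 ∧
            List.Lex (· < ·) [(0 : Fin 2)] p.1 ∧ List.Lex (· < ·) p.1 [(1 : Fin 2)]) ∧
          T.2.Chain' (fun p q => List.Lex (· < ·) q.1 p.1) ∧
          T.1 + (T.2.map fun p => p.2 * p.1.count 1).sum = m ∧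
          (T.2.map fun p => p.2 * p.1.count 0).sum + m = n},
        ((n.factorial : k) /
            ((T.1.factorial : k) * (T.2.map fun p => (p.2.factorial : k)).prod)) •
          (E [1] ^ T.1 *
            (T.2.map fun p => ((C p.1 / (p.1.length.factorial : k)) • E p.1) ^ p.2).prod) := by
  exact LS.final E hE1 hE2 C hC1
    (fun x w L h1 h2 h3 h4 h5 => hC2 x w L h1 h2 h3 ((LS.chain_iff L).2 h4) h5)
    B hB00 hB0 hBgt hBrec n m
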